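/- Let 0 < α ≤ 1 and 0 < β < 1. Then there exists a constant C > 0 (depending only on α and β) such that ∫₀^∞ (t + s)^{−1/2} (t + s/ε²)^{−1/2−α/2−β/2} ds ≤ C t^{−α/2−β/2} ε for all t > 0 and all 0 < ε ≤ 1. -/

import Mathlib

/-!
Write `p = 1/2 + α/2 + β/2 > 1/2`. Since `(t + s)^(-1/2) ≤ s^(-1/2)`, the substitution
`s = ε² t u` bounds the integral by `ε t^(1/2 - p) ∫₀^∞ u^(-1/2) (1 + u)^(-p) du`.
The last integral is finite (`integrableOn_kernel`): its integrand is at most `u^(-1/2)` near `0`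
and at most `u^(-1/2 - p)`, with `1/2 + p > 1`, near infinity.
-/

open MeasureTheory

lemma integrableOn_kernel (p : ℝ) (hp : 1 / 2 < p) :
    IntegrableOn (fun u : ℝ => u ^ (-(1 / 2) : ℝ) * (1 + u) ^ (-p)) (Set.Ioi 0) := by
  have hmeas : Measurable (fun u : ℝ => u ^ (-(1 / 2) : ℝ) * (1 + u) ^ (-p)) := by fun_prop
  rw [← Set.Ioc_union_Ioi_eq_Ioi (zero_le_one : (0 : ℝ) ≤ 1)]
  refine IntegrableOn.union ?_ ?_
  · have h : IntegrableOn (fun u : ℝ => u ^ (-(1 / 2) : ℝ)) (Set.Ioc 0 1) :=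
      (intervalIntegrable_iff_integrableOn_Ioc_of_le zero_le_one).1
        (intervalIntegral.intervalIntegrable_rpow' (by norm_num))
    refine Integrable.mono' h hmeas.aestronglyMeasurable ?_
    filter_upwards [ae_restrict_mem measurableSet_Ioc] with u hu
    have hu0 : 0 < u := hu.1
    rw [Real.norm_of_nonneg (by positivity)]
    exact mul_le_of_le_one_right (by positivity)
      (Real.rpow_le_one_of_one_le_of_nonpos (by linarith) (by linarith))
  · have h : IntegrableOn (fun u : ℝ => u ^ (-(1 / 2) + -p : ℝ)) (Set.Ioi 1) :=
      integrableOn_Ioi_rpow_of_lt (by linarith) one_pos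
    refine Integrable.mono' h hmeas.aestronglyMeasurable ?_
    filter_upwards [ae_restrict_mem measurableSet_Ioi] with u hu
    have hu0 : 0 < u := one_pos.trans hu
    rw [Real.norm_of_nonneg (by positivity), Real.rpow_add hu0]
    exact mul_le_mul_of_nonneg_left
      (Real.rpow_le_rpow_of_nonpos hu0 (by linarith) (by linarith)) (by positivity)

/-- The kernel at `u = s / (ε² t)`, which is what the substitution `s = ε² t u` produces. -/
lemma kernel_scaling (p t ε s : ℝ) (ht : 0 < t) (hε : 0 < ε) (hs : 0 < s) :
    s ^ (-(1 / 2) : ℝ) * (t + s / ε ^ 2) ^ (-p) =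
      ε⁻¹ * t ^ (-(1 / 2) - p) *
        (((ε ^ 2 * t)⁻¹ * s) ^ (-(1 / 2) : ℝ) * (1 + (ε ^ 2 * t)⁻¹ * s) ^ (-p)) := by
  have h1 : t + s / ε ^ 2 = t * (1 + (ε ^ 2 * t)⁻¹ * s) := by field_simp
  have h2 : s ^ (-(1 / 2) : ℝ) =
      ε⁻¹ * t ^ (-(1 / 2) : ℝ) * ((ε ^ 2 * t)⁻¹ * s) ^ (-(1 / 2) : ℝ) := by
    have h3 : ε⁻¹ = (ε ^ 2) ^ (-(1 / 2) : ℝ) := by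
      rw [← Real.rpow_natCast, ← Real.rpow_mul hε.le, ← Real.rpow_neg_one]
      norm_num
    rw [h3, ← Real.mul_rpow (by positivity) (by positivity),
      ← Real.mul_rpow (by positivity) (by positivity)]
    congr 1
    field_simp
  rw [h1, Real.mul_rpow ht.le (by positivity), h2, sub_eq_add_neg, Real.rpow_add ht]
  ring

theorem integral_bound_four (α β : ℝ) (hα0 : 0 < α) (hα1 : α ≤ 1) (hβ0 : 0 < β) (hβ1 : β < 1) :
    ∃ C : ℝ, 0 < C ∧ ∀ t ε : ℝ, 0 < t → 0 < ε → ε ≤ 1 →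
      (∫ s in Set.Ioi (0 : ℝ),
          (t + s) ^ (-(1 / 2) : ℝ) * (t + s / ε ^ 2) ^ (-(1 / 2) - α / 2 - β / 2 : ℝ))
        ≤ C * t ^ (-(α / 2) - β / 2 : ℝ) * ε := by
  obtain ⟨p, hp⟩ : ∃ p : ℝ, p = 1 / 2 + α / 2 + β / 2 := ⟨_, rfl⟩
  have e1 : (-(1 / 2) - α / 2 - β / 2 : ℝ) = -p := by rw [hp]; ring
  have e2 : (-(α / 2) - β / 2 : ℝ) = 1 + (-(1 / 2) - p) := by rw [hp]; ring
  rw [e1, e2]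
  set g : ℝ → ℝ := fun u => u ^ (-(1 / 2) : ℝ) * (1 + u) ^ (-p) with hg
  have hgint : IntegrableOn g (Set.Ioi 0) := integrableOn_kernel p (by linarith)
  have hK : 0 ≤ ∫ u in Set.Ioi (0 : ℝ), g u := by
    refine setIntegral_nonneg measurableSet_Ioi fun u hu => ?_
    have hu0 : (0 : ℝ) < u := hu
    positivity
  refine ⟨(∫ u in Set.Ioi (0 : ℝ), g u) + 1, by linarith, fun t ε ht hε _ => ?_⟩
  have hb : 0 < (ε ^ 2 * t)⁻¹ := by positivity
  have hint : IntegrableOn (fun s => g ((ε ^ 2 * t)⁻¹ * s)) (Set.Ioi 0) := by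
    rw [integrableOn_Ioi_comp_mul_left_iff g 0 hb, mul_zero]
    exact hgint
  calc _ ≤ ∫ s in Set.Ioi (0 : ℝ), ε⁻¹ * t ^ (-(1 / 2) - p) * g ((ε ^ 2 * t)⁻¹ * s) := by
        refine integral_mono_of_nonneg ?_ (hint.const_mul _) ?_
        · filter_upwards [ae_restrict_mem measurableSet_Ioi] with s hs
          have hs0 : (0 : ℝ) < s := hs
          simp only [Pi.zero_apply]
          positivity
        · filter_upwards [ae_restrict_mem measurableSet_Ioi] with s hs
          have hs0 : (0 : ℝ) < s := hs
          simp only [hg]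
          rw [← kernel_scaling p t ε s ht hε hs0]
          exact mul_le_mul_of_nonneg_right
            (Real.rpow_le_rpow_of_nonpos hs0 (by linarith) (by norm_num)) (by positivity)
    _ = (∫ u in Set.Ioi (0 : ℝ), g u) * t ^ (1 + (-(1 / 2) - p)) * ε := by
        rw [integral_const_mul, integral_comp_mul_left_Ioi g 0 hb, mul_zero, smul_eq_mul,
          inv_inv, Real.rpow_add ht, Real.rpow_one]
        field_simp
    _ ≤ _ := by
        gcongr
        linarith
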